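/- Let f be a polynomial of degree at most k on ℝ^n (n ≥ 3) and β a multi-index with |β| ≥ k+1. Then for every x with |x| < R, ∫_{|y|=R} D_x^β Γ(x−y) f(y) dσ(y) = 0, where Γ is the fundamental solution of the Laplacian. -/

import Mathlib

open MeasureTheory Metric

noncomputable section

/-- Surface area of the unit sphere in ℝⁿ. -/
def sphArea (n : ℕ) : ℝ :=
  (μH[(n : ℝ) - 1] (sphere (0 : EuclideanSpace ℝ (Fin n)) 1)).toReal

/-- The fundamental solution of the Laplacian in ℝⁿ, `Γ(x) = c_n |x|^{2-n}`
with `c_n = 1/(n(2-n)ω_n)`. -/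
def fundSol (n : ℕ) (x : EuclideanSpace ℝ (Fin n)) : ℝ :=
  (1 / (n * (2 - (n : ℝ)) * sphArea n)) * ‖x‖ ^ ((2 : ℝ) - n)

/-- The `i`-th standard basis vector. -/
def ee {n : ℕ} (i : Fin n) : EuclideanSpace ℝ (Fin n) := EuclideanSpace.single i 1

open Topology Filter Set
open scoped ContDiff

section pot
variable {n : ℕ} {G : Type} [NormedAddCommGroup G] [NormedSpace ℝ G]

/-- convolution-type potential -/
def pot (σ : Measure (EuclideanSpace ℝ (Fin n))) (k : EuclideanSpace ℝ (Fin n) → G)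
    (f : EuclideanSpace ℝ (Fin n) → ℝ) (x : EuclideanSpace ℝ (Fin n)) : G :=
  ∫ y, f y • k (x - y) ∂σ

variable {σ : Measure (EuclideanSpace ℝ (Fin n))} {R : ℝ}

lemma sph_integrable [IsFiniteMeasure σ] (hσ : ∀ᵐ y ∂σ, y ∈ sphere (0 : EuclideanSpace ℝ (Fin n)) R)
    {φ : EuclideanSpace ℝ (Fin n) → G}
    (h : ContinuousOn φ (sphere (0 : EuclideanSpace ℝ (Fin n)) R)) : Integrable φ σ := by
  have h1 : IntegrableOn φ (sphere (0 : EuclideanSpace ℝ (Fin n)) R) σ :=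
    h.integrableOn_compact (isCompact_sphere _ _)
  rwa [IntegrableOn, Measure.restrict_eq_self_of_ae_mem hσ] at h1

lemma sub_ne_of_ball {x y : EuclideanSpace ℝ (Fin n)} (hx : x ∈ ball (0 : EuclideanSpace ℝ (Fin n)) R)
    (hy : y ∈ sphere (0 : EuclideanSpace ℝ (Fin n)) R) : x - y ∈ ({0}ᶜ : Set (EuclideanSpace ℝ (Fin n))) := by
  intro h
  have : x = y := sub_eq_zero.1 h
  subst this
  simp at hx hy
  linarith

lemma pot_integrable [IsFiniteMeasure σ] (hσ : ∀ᵐ y ∂σ, y ∈ sphere (0 : EuclideanSpace ℝ (Fin n)) R)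
    {k : EuclideanSpace ℝ (Fin n) → G} {f : EuclideanSpace ℝ (Fin n) → ℝ}
    (hk : ContinuousOn k {0}ᶜ) (hf : Continuous f) {x : EuclideanSpace ℝ (Fin n)}
    (hx : x ∈ ball (0 : EuclideanSpace ℝ (Fin n)) R) :
    Integrable (fun y => f y • k (x - y)) σ := by
  apply sph_integrable hσ
  apply hf.continuousOn.smul
  exact hk.comp (by fun_prop) fun y hy => sub_ne_of_ball hx hy

lemma pot_hasFDerivAt [IsFiniteMeasure σ]
    (hσ : ∀ᵐ y ∂σ, y ∈ sphere (0 : EuclideanSpace ℝ (Fin n)) R)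
    {k : EuclideanSpace ℝ (Fin n) → G} {f : EuclideanSpace ℝ (Fin n) → ℝ}
    (hk : ContDiffOn ℝ ∞ k {0}ᶜ) (hf : Continuous f) {x : EuclideanSpace ℝ (Fin n)}
    (hx : x ∈ ball (0 : EuclideanSpace ℝ (Fin n)) R) :
    HasFDerivAt (pot σ k f) (pot σ (fderiv ℝ k) f x) x := by
  have hk' : ContinuousOn (fderiv ℝ k) {0}ᶜ :=
    hk.continuousOn_fderiv_of_isOpen isOpen_compl_singleton (by simp)
  obtain ⟨ε, hε, hεs⟩ := Metric.nhds_basis_closedBall.mem_iff.1 (isOpen_ball.mem_nhds hx)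
  have hc : ContinuousOn (fun q : EuclideanSpace ℝ (Fin n) × EuclideanSpace ℝ (Fin n) =>
      f q.2 • fderiv ℝ k (q.1 - q.2)) (closedBall x ε ×ˢ sphere 0 R) := by
    apply (hf.comp continuous_snd).continuousOn.smul
    exact hk'.comp (by fun_prop) fun q hq => sub_ne_of_ball (hεs hq.1) hq.2
  obtain ⟨C, hC⟩ := ((isCompact_closedBall x ε).prod (isCompact_sphere _ _)).exists_bound_of_continuousOn hc
  refine hasFDerivAt_integral_of_dominated_of_fderiv_le (s := closedBall x ε)
    (F' := fun x y => f y • fderiv ℝ k (x - y)) (bound := fun _ => C)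
    (closedBall_mem_nhds x hε) ?_ ?_ ?_ ?_ (integrable_const _) ?_
  · filter_upwards [isOpen_ball.mem_nhds hx] with z hz
    exact (pot_integrable hσ hk.continuousOn hf hz).1
  · exact pot_integrable hσ hk.continuousOn hf hx
  · exact (pot_integrable hσ hk' hf hx).1
  · filter_upwards [hσ] with y hy z hz
    exact hC (z, y) ⟨hz, hy⟩
  · filter_upwards [hσ] with y hy z hz
    have h1 : HasFDerivAt k (fderiv ℝ k (z - y)) (z - y) :=
      ((hk.contDiffAt (isOpen_compl_singleton.mem_nhds
        (sub_ne_of_ball (hεs hz) hy))).differentiableAt (by simp)).hasFDerivAt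
    exact ((hasFDerivAt_comp_sub y).2 h1).const_smul (f y)

end pot

lemma pot_contDiffOn_nat {n : ℕ} {σ : Measure (EuclideanSpace ℝ (Fin n))} {R : ℝ} [IsFiniteMeasure σ]
    (hσ : ∀ᵐ y ∂σ, y ∈ sphere (0 : EuclideanSpace ℝ (Fin n)) R)
    {f : EuclideanSpace ℝ (Fin n) → ℝ} (hf : Continuous f) (N : ℕ) :
    ∀ (G : Type) [NormedAddCommGroup G] [NormedSpace ℝ G]
      (k : EuclideanSpace ℝ (Fin n) → G) (_ : ContDiffOn ℝ ∞ k {0}ᶜ),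
      ContDiffOn ℝ N (pot σ k f) (ball 0 R) := by
  induction N with
  | zero =>
    intro G _ _ k hk
    rw [Nat.cast_zero, contDiffOn_zero]
    exact fun x hx => (pot_hasFDerivAt hσ hk hf hx).continuousAt.continuousWithinAt
  | succ N ih =>
    intro G _ _ k hk
    push_cast
    rw [contDiffOn_succ_iff_fderiv_of_isOpen isOpen_ball]
    refine ⟨fun x hx => (pot_hasFDerivAt hσ hk hf hx).differentiableAt.differentiableWithinAt,
      by simp, ?_⟩
    refine (ih _ (fderiv ℝ k) ?_).congr fun x hx => (pot_hasFDerivAt hσ hk hf hx).fderiv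
    exact hk.fderiv_of_isOpen isOpen_compl_singleton (by simp)

lemma pot_contDiffOn {n : ℕ} {σ : Measure (EuclideanSpace ℝ (Fin n))} {R : ℝ} [IsFiniteMeasure σ]
    (hσ : ∀ᵐ y ∂σ, y ∈ sphere (0 : EuclideanSpace ℝ (Fin n)) R)
    {f : EuclideanSpace ℝ (Fin n) → ℝ} (hf : Continuous f)
    {k : EuclideanSpace ℝ (Fin n) → ℝ} (hk : ContDiffOn ℝ ∞ k {0}ᶜ) :
    ContDiffOn ℝ ∞ (pot σ k f) (ball 0 R) :=
  contDiffOn_infty.2 fun N => pot_contDiffOn_nat hσ hf N ℝ k hk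

lemma pot_fderiv_apply {n : ℕ} {σ : Measure (EuclideanSpace ℝ (Fin n))} {R : ℝ} [IsFiniteMeasure σ]
    (hσ : ∀ᵐ y ∂σ, y ∈ sphere (0 : EuclideanSpace ℝ (Fin n)) R)
    {f : EuclideanSpace ℝ (Fin n) → ℝ} (hf : Continuous f)
    {k : EuclideanSpace ℝ (Fin n) → ℝ} (hk : ContDiffOn ℝ ∞ k {0}ᶜ)
    {x : EuclideanSpace ℝ (Fin n)} (hx : x ∈ ball (0 : EuclideanSpace ℝ (Fin n)) R)
    (w : EuclideanSpace ℝ (Fin n)) :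
    fderiv ℝ (pot σ k f) x w = pot σ (fun z => fderiv ℝ k z w) f x := by
  rw [(pot_hasFDerivAt hσ hk hf hx).fderiv, pot, ContinuousLinearMap.integral_apply]
  · rfl
  · exact pot_integrable hσ (hk.continuousOn_fderiv_of_isOpen isOpen_compl_singleton (by simp)) hf hx

/-- iterated directional derivatives -/
def DW {E : Type} [NormedAddCommGroup E] [NormedSpace ℝ E] : List E → (E → ℝ) → (E → ℝ)
  | [], u => u
  | w :: l, u => fun x => fderiv ℝ (DW l u) x w

section DWs
variable {E : Type} [NormedAddCommGroup E] [NormedSpace ℝ E]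

lemma dir_contDiffOn {u : E → ℝ} {B : Set E} (hB : IsOpen B) (hu : ContDiffOn ℝ ∞ u B)
    (w : E) : ContDiffOn ℝ ∞ (fun x => fderiv ℝ u x w) B :=
  (hu.fderiv_of_isOpen hB (by simp)).clm_apply contDiffOn_const

lemma DW_contDiffOn {u : E → ℝ} {B : Set E} (hB : IsOpen B) (hu : ContDiffOn ℝ ∞ u B)
    (l : List E) : ContDiffOn ℝ ∞ (DW l u) B := by
  induction l with
  | nil => exact hu
  | cons w l ih => exact dir_contDiffOn hB ih w

lemma dir_congr {u u' : E → ℝ} {B : Set E} (hB : IsOpen B) (h : EqOn u u' B) {x : E} (hx : x ∈ B) :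
    fderiv ℝ u x = fderiv ℝ u' x :=
  (h.eventuallyEq_of_mem (hB.mem_nhds hx)).fderiv_eq

lemma DW_congr {u u' : E → ℝ} {B : Set E} (hB : IsOpen B) (h : EqOn u u' B)
    (l : List E) : EqOn (DW l u) (DW l u') B := by
  induction l with
  | nil => exact h
  | cons w l ih =>
    intro x hx
    simp only [DW]
    rw [dir_congr hB ih hx]

lemma DW_comp_sub (u : E → ℝ) (y : E) (l : List E) (x : E) :
    DW l (fun z => u (z - y)) x = DW l u (x - y) := by
  induction l generalizing x with
  | nil => rfl
  | cons w l ih =>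
    simp only [DW]
    rw [funext ih, fderiv_comp_sub]

lemma iter_eq_DW {u : E → ℝ} {B : Set E} (hB : IsOpen B) (hu : ContDiffOn ℝ ∞ u B)
    (m : ℕ) : ∀ (v : Fin m → E), ∀ x ∈ B, iteratedFDeriv ℝ m u x v = DW (List.ofFn v) u x := by
  induction m with
  | zero => intro v x hx; simp [DW]
  | succ m ih =>
    intro v x hx
    rw [iteratedFDeriv_succ_apply_left, List.ofFn_succ]
    simp only [DW]
    have h1 : DifferentiableAt ℝ (iteratedFDeriv ℝ m u) x :=
      (hu.contDiffAt (hB.mem_nhds hx)).differentiableAt_iteratedFDeriv (by exact_mod_cast ENat.natCast_lt_top m)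
    have h2 : fderiv ℝ (DW (List.ofFn fun i : Fin m => v i.succ) u) x
        = fderiv ℝ (fun z => iteratedFDeriv ℝ m u z (fun i : Fin m => v i.succ)) x :=
      dir_congr hB (fun z hz => (ih _ z hz).symm) hx
    rw [h2, fderiv_continuousMultilinear_apply_const_apply h1]
    rfl

end DWs

lemma pot_DW {n : ℕ} {σ : Measure (EuclideanSpace ℝ (Fin n))} {R : ℝ} [IsFiniteMeasure σ]
    (hσ : ∀ᵐ y ∂σ, y ∈ sphere (0 : EuclideanSpace ℝ (Fin n)) R)
    {f : EuclideanSpace ℝ (Fin n) → ℝ} (hf : Continuous f)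
    {k : EuclideanSpace ℝ (Fin n) → ℝ} (hk : ContDiffOn ℝ ∞ k {0}ᶜ)
    (l : List (EuclideanSpace ℝ (Fin n))) :
    EqOn (DW l (pot σ k f)) (pot σ (DW l k) f) (ball 0 R) := by
  induction l with
  | nil => intro x _; rfl
  | cons w l ih =>
    intro x hx
    simp only [DW]
    rw [dir_congr isOpen_ball ih hx,
      pot_fderiv_apply hσ hf (DW_contDiffOn isOpen_compl_singleton hk l) hx]

section euler
variable {E : Type} [NormedAddCommGroup E] [NormedSpace ℝ E]

/-- Euler operator plus a constant -/
def Op (a : ℝ) (u : E → ℝ) (x : E) : ℝ := fderiv ℝ u x x + a * u x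

lemma Op_contDiffOn {u : E → ℝ} {B : Set E} (hB : IsOpen B) (hu : ContDiffOn ℝ ∞ u B)
    (a : ℝ) : ContDiffOn ℝ ∞ (Op a u) B :=
  ((hu.fderiv_of_isOpen hB (by simp)).clm_apply contDiffOn_id).add (contDiffOn_const.mul hu)

lemma smooth_facts {u : E → ℝ} {B : Set E} (hB : IsOpen B) (hu : ContDiffOn ℝ ∞ u B)
    {x : E} (hx : x ∈ B) : HasFDerivAt u (fderiv ℝ u x) x ∧
      HasFDerivAt (fderiv ℝ u) (fderiv ℝ (fderiv ℝ u) x) x ∧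
      ∀ v w, fderiv ℝ (fderiv ℝ u) x v w = fderiv ℝ (fderiv ℝ u) x w v := by
  have h0 := hu.contDiffAt (hB.mem_nhds hx)
  refine ⟨(h0.differentiableAt (by simp)).hasFDerivAt, ?_, ?_⟩
  · have h1 : ContDiffOn ℝ ∞ (fderiv ℝ u) B := hu.fderiv_of_isOpen hB (by simp)
    exact ((h1.contDiffAt (hB.mem_nhds hx)).differentiableAt (by simp)).hasFDerivAt
  · intro v w
    exact (h0.isSymmSndFDerivAt (by simp; exact ENat.LEInfty.out)).eq v w

lemma fderiv_field {u : E → ℝ} {B : Set E} (hB : IsOpen B) (hu : ContDiffOn ℝ ∞ u B)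
    {x : E} (hx : x ∈ B) (A : E →L[ℝ] E) (w : E) :
    fderiv ℝ (fun z => fderiv ℝ u z (A z)) x w =
      fderiv ℝ (fderiv ℝ u) x w (A x) + fderiv ℝ u x (A w) := by
  obtain ⟨h1, h2, h3⟩ := smooth_facts hB hu hx
  rw [(h2.clm_apply A.hasFDerivAt).fderiv]
  simp [add_comm]

lemma fderiv_dir {u : E → ℝ} {B : Set E} (hB : IsOpen B) (hu : ContDiffOn ℝ ∞ u B)
    {x : E} (hx : x ∈ B) (v : E) (w : E) :
    fderiv ℝ (fun z => fderiv ℝ u z v) x w = fderiv ℝ (fderiv ℝ u) x w v := by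
  obtain ⟨h1, h2, h3⟩ := smooth_facts hB hu hx
  rw [(h2.clm_apply (hasFDerivAt_const v x)).fderiv]
  simp

lemma Op_dir {u : E → ℝ} {B : Set E} (hB : IsOpen B) (hu : ContDiffOn ℝ ∞ u B)
    (a : ℝ) {x : E} (hx : x ∈ B) (w : E) :
    fderiv ℝ (Op a u) x w = Op (a + 1) (fun z => fderiv ℝ u z w) x := by
  obtain ⟨h1, h2, h3⟩ := smooth_facts hB hu hx
  have h4 : HasFDerivAt (Op a u) _ x := (h2.clm_apply (hasFDerivAt_id x)).add (h1.const_mul a)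
  rw [h4.fderiv, Op, fderiv_dir hB hu hx, h3 x w]
  simp
  ring

lemma DW_Op {u : E → ℝ} {B : Set E} (hB : IsOpen B) (hu : ContDiffOn ℝ ∞ u B)
    (a : ℝ) (l : List E) : EqOn (DW l (Op a u)) (Op (a + l.length) (DW l u)) B := by
  induction l with
  | nil => intro x _; simp [DW]
  | cons w l ih =>
    intro x hx
    simp only [DW]
    rw [dir_congr hB ih hx, Op_dir hB (DW_contDiffOn hB hu l) _ hx]
    simp [add_assoc]

lemma Op_congr {u u' : E → ℝ} {B : Set E} (hB : IsOpen B) (h : EqOn u u' B) (a : ℝ) :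
    EqOn (Op a u) (Op a u') B := by
  intro x hx
  simp only [Op]
  rw [dir_congr hB h hx, h hx]

lemma Op_zero {u : E → ℝ} {R : ℝ} (hu : ContDiffOn ℝ ∞ u (ball 0 R)) (a : ℕ)
    (h : ∀ x ∈ ball (0 : E) R, Op (a + 1) u x = 0) : ∀ x ∈ ball (0 : E) R, u x = 0 := by
  intro x hx
  have hin : ∀ t ∈ Icc (0 : ℝ) 1, t • x ∈ ball (0 : E) R := by
    intro t ht
    simp only [mem_ball_zero_iff, norm_smul, Real.norm_eq_abs, abs_of_nonneg ht.1] at hx ⊢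
    exact lt_of_le_of_lt (mul_le_of_le_one_left (norm_nonneg _) ht.2) hx
  have hd : ∀ t ∈ Icc (0 : ℝ) 1, HasDerivAt (fun t : ℝ => t ^ (a + 1) * u (t • x))
      (((a + 1 : ℕ) : ℝ) * t ^ a * u (t • x) + t ^ (a + 1) * fderiv ℝ u (t • x) x) t := by
    intro t ht
    have h1 := (smooth_facts isOpen_ball hu (hin t ht)).1
    have h2 : HasDerivAt (fun t : ℝ => t • x) x t := by
      simpa using (hasDerivAt_id t).smul_const x
    exact (hasDerivAt_pow (a + 1) t).mul (h1.comp_hasDerivAt t h2)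
  obtain ⟨c, hc, hc'⟩ := exists_hasDerivAt_eq_slope _ _ (zero_lt_one' ℝ)
    (fun t ht => (hd t ht).continuousAt.continuousWithinAt)
    (fun t ht => hd t (Ioo_subset_Icc_self ht))
  have h3 := h _ (hin c (Ioo_subset_Icc_self hc))
  rw [Op, map_smul, smul_eq_mul] at h3
  have h4 : (((a + 1 : ℕ) : ℝ) * c ^ a * u (c • x) + c ^ (a + 1) * fderiv ℝ u (c • x) x) = 0 := by
    push_cast
    linear_combination c ^ a * h3
  rw [h4] at hc'
  simpa using hc'.symm

end euler

/-- generator of the rotation in the `i,j` plane -/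
def gen {n : ℕ} (i j : Fin n) : EuclideanSpace ℝ (Fin n) →L[ℝ] EuclideanSpace ℝ (Fin n) :=
  (EuclideanSpace.proj (𝕜 := ℝ) i).smulRight (ee j) - (EuclideanSpace.proj (𝕜 := ℝ) j).smulRight (ee i)

lemma gen_apply {n : ℕ} (i j : Fin n) (x : EuclideanSpace ℝ (Fin n)) :
    gen i j x = x i • ee j - x j • ee i := rfl

lemma ee_sum {n : ℕ} (x : EuclideanSpace ℝ (Fin n)) : ∑ i, x i • ee i = x := by
  ext j
  simp [ee, Finset.sum_apply, Pi.single_apply]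

lemma ee_apply {n : ℕ} (i j : Fin n) : (ee i : EuclideanSpace ℝ (Fin n)) j = if j = i then 1 else 0 := by
  simp [ee, Pi.single_apply]

lemma gen_inner {n : ℕ} (i j : Fin n) (x y : EuclideanSpace ℝ (Fin n)) :
    inner ℝ (gen i j x) y = - inner ℝ x (gen i j y) := by
  simp only [gen_apply, inner_sub_left, inner_sub_right, inner_smul_left, inner_smul_right, ee,
    EuclideanSpace.inner_single_left, EuclideanSpace.inner_single_right]
  simp
  ring

/-- Laplacian in coordinates -/
def lap {n : ℕ} (u : EuclideanSpace ℝ (Fin n) → ℝ) (x : EuclideanSpace ℝ (Fin n)) : ℝ :=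
  ∑ i, fderiv ℝ (fderiv ℝ u) x (ee i) (ee i)

lemma sum_first {n : ℕ} (Lf : EuclideanSpace ℝ (Fin n) →L[ℝ] ℝ) (x : EuclideanSpace ℝ (Fin n)) :
    ∑ i, ∑ j, Lf (gen i j (gen i j x)) = - 2 * (n - 1) * Lf x := by
  have h : ∀ i j : Fin n, Lf (gen i j (gen i j x)) =
      (if j = i then 2 * (x i * Lf (ee i)) else 0) - x i * Lf (ee i) - x j * Lf (ee j) := by
    intro i j
    rw [gen_apply, gen_apply]
    by_cases hij : j = i
    · subst hij; simp; ring
    · simp [ee_apply, hij, Ne.symm hij]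
      ring
  have hx : ∑ i, x i * Lf (ee i) = Lf x := by
    conv_rhs => rw [← ee_sum x]
    simp
  simp_rw [h, Finset.sum_sub_distrib]
  simp [hx, ← Finset.mul_sum]
  ring

lemma sum_second {n : ℕ} (Q : EuclideanSpace ℝ (Fin n) →L[ℝ] EuclideanSpace ℝ (Fin n) →L[ℝ] ℝ)
    (hQ : ∀ v w, Q v w = Q w v) (x : EuclideanSpace ℝ (Fin n)) :
    ∑ i, ∑ j, Q (gen i j x) (gen i j x) = 2 * (‖x‖ ^ 2 * ∑ i, Q (ee i) (ee i) - Q x x) := by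
  have h : ∀ i j : Fin n, Q (gen i j x) (gen i j x) =
      (x i) ^ 2 * Q (ee j) (ee j) + Q (ee i) (ee i) * (x j) ^ 2
       - 2 * (x i * (x j * Q (ee i) (ee j))) := by
    intro i j
    rw [gen_apply]
    simp
    rw [hQ (ee j) (ee i)]
    ring
  have hx : ∑ i, ∑ j, x i * (x j * Q (ee i) (ee j)) = Q x x := by
    conv_rhs => rw [← ee_sum x]
    simp only [map_sum, map_smul, _root_.sum_apply, _root_.smul_apply,
      smul_eq_mul]
    simp only [Finset.mul_sum]
    rw [Finset.sum_comm]
    refine Finset.sum_congr rfl fun i _ => Finset.sum_congr rfl fun j _ => ?_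
    ring
  have hn : ‖x‖ ^ 2 = ∑ i, (x i) ^ 2 := by
    rw [EuclideanSpace.norm_sq_eq]; simp
  have key : ∑ i, ∑ j, x i ^ 2 * Q (ee j) (ee j) = (∑ i, x i ^ 2) * ∑ j, Q (ee j) (ee j) := by
    rw [Finset.sum_mul_sum]
  have h5 : ∑ i, ∑ j, Q (ee i) (ee i) * x j ^ 2 = ∑ i, ∑ j, x i ^ 2 * Q (ee j) (ee j) := by
    rw [Finset.sum_comm]
    simp [mul_comm]
  have h6 : ∑ i, ∑ j, 2 * (x i * (x j * Q (ee i) (ee j))) = 2 * Q x x := by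
    rw [← hx]
    simp only [Finset.mul_sum]
  simp_rw [h, Finset.sum_sub_distrib, Finset.sum_add_distrib]
  rw [h5, key, h6, hn]
  ring

/-- rotation field derivative -/
def LA {n : ℕ} (A : EuclideanSpace ℝ (Fin n) →L[ℝ] EuclideanSpace ℝ (Fin n))
    (u : EuclideanSpace ℝ (Fin n) → ℝ) (x : EuclideanSpace ℝ (Fin n)) : ℝ := fderiv ℝ u x (A x)

lemma sph_lap {n : ℕ} {u : EuclideanSpace ℝ (Fin n) → ℝ} {B : Set (EuclideanSpace ℝ (Fin n))}
    (hB : IsOpen B) (hu : ContDiffOn ℝ ∞ u B)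
    {x : EuclideanSpace ℝ (Fin n)} (hx : x ∈ B) :
    ∑ i, ∑ j, LA (gen i j) (LA (gen i j) u) x =
      2 * (‖x‖ ^ 2 * lap u x - Op 0 (Op (n - 2) u) x) := by
  have h1 : ∀ i j, LA (gen i j) (LA (gen i j) u) x =
      fderiv ℝ (fderiv ℝ u) x (gen i j x) (gen i j x) + fderiv ℝ u x (gen i j (gen i j x)) :=
    fun i j => fderiv_field hB hu hx (gen i j) _
  simp_rw [h1, Finset.sum_add_distrib]
  rw [sum_first, sum_second _ (smooth_facts hB hu hx).2.2, ← lap]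
  have h2 : Op 0 (Op (n - 2) u) x =
      fderiv ℝ (fderiv ℝ u) x x x + (n - 1) * fderiv ℝ u x x := by
    rw [Op, Op_dir hB hu _ hx, Op, fderiv_dir hB hu hx]
    ring
  rw [h2]
  ring

/-- rotation group -/
def rot {n : ℕ} (i j : Fin n) (t : ℝ) : EuclideanSpace ℝ (Fin n) →L[ℝ] EuclideanSpace ℝ (Fin n) :=
  NormedSpace.exp (t • gen i j)

lemma rot_unitary {n : ℕ} (i j : Fin n) (t : ℝ) :
    rot i j t ∈ unitary (EuclideanSpace ℝ (Fin n) →L[ℝ] EuclideanSpace ℝ (Fin n)) := by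
  let : NormedAlgebra ℚ (EuclideanSpace ℝ (Fin n) →L[ℝ] EuclideanSpace ℝ (Fin n)) :=
    NormedAlgebra.restrictScalars ℚ ℝ _
  apply NormedSpace.exp_mem_unitary_of_mem_skewAdjoint
  rw [skewAdjoint.mem_iff]
  have hs : star (gen i j) = - gen i j := by
    rw [ContinuousLinearMap.star_eq_adjoint]
    symm
    rw [ContinuousLinearMap.eq_adjoint_iff]
    intro x y
    simp [gen_inner]
  rw [star_smul, hs]
  exact smul_neg t (gen i j)

/-- rotation as isometry -/
def rotE {n : ℕ} (i j : Fin n) (t : ℝ) : EuclideanSpace ℝ (Fin n) ≃ₗᵢ[ℝ] EuclideanSpace ℝ (Fin n) :=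
  Unitary.linearIsometryEquiv ⟨rot i j t, rot_unitary i j t⟩

lemma rotE_apply {n : ℕ} (i j : Fin n) (t : ℝ) (x : EuclideanSpace ℝ (Fin n)) :
    rotE i j t x = rot i j t x := rfl

lemma rot_zero {n : ℕ} (i j : Fin n) (x : EuclideanSpace ℝ (Fin n)) :
    rot i j 0 x = x := by
  have h : (0 : ℝ) • gen i j = 0 := zero_smul ℝ (gen i j)
  rw [rot, h, NormedSpace.exp_zero]
  rfl

lemma rot_deriv {n : ℕ} (i j : Fin n) (t : ℝ) (x : EuclideanSpace ℝ (Fin n)) :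
    HasDerivAt (fun t => rot i j t x) (rot i j t (gen i j x)) t := by
  have h := hasDerivAt_exp_smul_const (𝕂 := ℝ) (gen i j) t
  have h2 := h.clm_apply (hasDerivAt_const t x)
  rw [map_zero, add_zero] at h2
  exact h2

section rotpot
variable {n : ℕ} {σ : Measure (EuclideanSpace ℝ (Fin n))} {R : ℝ} [IsFiniteMeasure σ]
    {f : EuclideanSpace ℝ (Fin n) → ℝ} {k : EuclideanSpace ℝ (Fin n) → ℝ}

lemma pot_rot (hinv : ∀ ρ : EuclideanSpace ℝ (Fin n) ≃ₗᵢ[ℝ] EuclideanSpace ℝ (Fin n), MeasurePreserving ρ σ σ)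
    (hkr : ∀ (ρ : EuclideanSpace ℝ (Fin n) ≃ₗᵢ[ℝ] EuclideanSpace ℝ (Fin n)) z, k (ρ z) = k z)
    (ρ : EuclideanSpace ℝ (Fin n) ≃ₗᵢ[ℝ] EuclideanSpace ℝ (Fin n)) (x : EuclideanSpace ℝ (Fin n)) :
    pot σ k f (ρ x) = ∫ y, f (ρ y) • k (x - y) ∂σ := by
  rw [pot, ← (hinv ρ).integral_comp ρ.toHomeomorph.measurableEmbedding]
  simp_rw [← map_sub, hkr]

lemma LA_pot
    (hσ : ∀ᵐ y ∂σ, y ∈ sphere (0 : EuclideanSpace ℝ (Fin n)) R)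
    (hinv : ∀ ρ : EuclideanSpace ℝ (Fin n) ≃ₗᵢ[ℝ] EuclideanSpace ℝ (Fin n), MeasurePreserving ρ σ σ)
    {f : EuclideanSpace ℝ (Fin n) → ℝ} (hf : ContDiff ℝ ∞ f)
    {k : EuclideanSpace ℝ (Fin n) → ℝ} (hk : ContDiffOn ℝ ∞ k {0}ᶜ)
    (hkr : ∀ (ρ : EuclideanSpace ℝ (Fin n) ≃ₗᵢ[ℝ] EuclideanSpace ℝ (Fin n)) z, k (ρ z) = k z)
    (i j : Fin n) {x : EuclideanSpace ℝ (Fin n)}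
    (hx : x ∈ ball (0 : EuclideanSpace ℝ (Fin n)) R) :
    LA (gen i j) (pot σ k f) x = pot σ k (LA (gen i j) f) x := by
  have h1 : HasDerivAt (fun t : ℝ => pot σ k f (rot i j t x)) (LA (gen i j) (pot σ k f) x) 0 := by
    have h2 := rot_deriv i j 0 x
    rw [rot_zero] at h2
    have h3 := (smooth_facts isOpen_ball (pot_contDiffOn hσ hf.continuous hk) hx).1
    rw [← rot_zero i j x] at h3
    have h4 := h3.comp_hasDerivAt (0 : ℝ) h2
    rw [rot_zero] at h4
    exact h4
  have hdf : Continuous (fderiv ℝ f) := hf.continuous_fderiv (by simp)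
  obtain ⟨C, hC⟩ := (isCompact_sphere (0 : EuclideanSpace ℝ (Fin n)) R).exists_bound_of_continuousOn
    (f := fderiv ℝ f) hdf.continuousOn
  have hkc : ContinuousOn (fun y => k (x - y)) (sphere (0 : EuclideanSpace ℝ (Fin n)) R) :=
    hk.continuousOn.comp (by fun_prop) fun y hy => sub_ne_of_ball hx hy
  have hint : ∀ t : ℝ, Integrable (fun y => f (rot i j t y) • k (x - y)) σ := fun t =>
    sph_integrable hσ ((hf.continuous.comp (rot i j t).continuous).continuousOn.smul hkc)
  have h5 : HasDerivAt (fun t : ℝ => ∫ y, f (rot i j t y) • k (x - y) ∂σ)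
      (∫ y, (fderiv ℝ f (rot i j 0 y) (rot i j 0 (gen i j y))) • k (x - y) ∂σ) 0 := by
    refine (hasDerivAt_integral_of_dominated_loc_of_deriv_le (s := univ)
      (F' := fun t y => (fderiv ℝ f (rot i j t y) (rot i j t (gen i j y))) • k (x - y))
      (bound := fun y => C * ‖gen i j y‖ * ‖k (x - y)‖) univ_mem ?_ (hint 0) ?_ ?_ ?_ ?_).2
    · exact Eventually.of_forall fun t => (hint t).1
    · have hc0 : Continuous fun y => fderiv ℝ f (rot i j 0 y) (rot i j 0 (gen i j y)) :=
        (hdf.comp (rot i j 0).continuous).clm_apply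
          ((rot i j 0).continuous.comp (gen i j).continuous)
      exact (sph_integrable hσ (hc0.continuousOn.smul hkc)).1
    · filter_upwards [hσ] with y hy t _
      rw [norm_smul]
      refine mul_le_mul_of_nonneg_right ?_ (norm_nonneg _)
      refine ((fderiv ℝ f (rot i j t y)).le_opNorm _).trans ?_
      rw [← rotE_apply, ← rotE_apply, LinearIsometryEquiv.norm_map]
      refine mul_le_mul_of_nonneg_right (hC _ ?_) (norm_nonneg _)
      simpa using hy
    · exact sph_integrable hσ (((gen i j).continuous.norm.const_mul C |>.continuousOn).mul hkc.norm)
    · refine Eventually.of_forall fun y t _ => ?_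
      have h6 : HasFDerivAt f (fderiv ℝ f (rot i j t y)) (rot i j t y) :=
        (hf.differentiable (by simp) _).hasFDerivAt
      exact (h6.comp_hasDerivAt t (rot_deriv i j t y)).smul_const (k (x - y))
  have h7 : (fun t : ℝ => pot σ k f (rot i j t x)) = fun t : ℝ => ∫ y, f (rot i j t y) • k (x - y) ∂σ := by
    funext t
    exact pot_rot hinv hkr (rotE i j t) x
  rw [h7] at h1
  have h8 := h1.unique h5
  simp_rw [rot_zero] at h8
  exact h8

lemma LA_contDiff {f : EuclideanSpace ℝ (Fin n) → ℝ} (hf : ContDiff ℝ ∞ f)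
    (A : EuclideanSpace ℝ (Fin n) →L[ℝ] EuclideanSpace ℝ (Fin n)) :
    ContDiff ℝ ∞ (LA A f) :=
  (hf.fderiv_right (by simp)).clm_apply A.contDiff

lemma LALA_pot
    (hσ : ∀ᵐ y ∂σ, y ∈ sphere (0 : EuclideanSpace ℝ (Fin n)) R)
    (hinv : ∀ ρ : EuclideanSpace ℝ (Fin n) ≃ₗᵢ[ℝ] EuclideanSpace ℝ (Fin n), MeasurePreserving ρ σ σ)
    {f : EuclideanSpace ℝ (Fin n) → ℝ} (hf : ContDiff ℝ ∞ f)
    {k : EuclideanSpace ℝ (Fin n) → ℝ} (hk : ContDiffOn ℝ ∞ k {0}ᶜ)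
    (hkr : ∀ (ρ : EuclideanSpace ℝ (Fin n) ≃ₗᵢ[ℝ] EuclideanSpace ℝ (Fin n)) z, k (ρ z) = k z)
    (i j : Fin n) {x : EuclideanSpace ℝ (Fin n)}
    (hx : x ∈ ball (0 : EuclideanSpace ℝ (Fin n)) R) :
    LA (gen i j) (LA (gen i j) (pot σ k f)) x = pot σ k (LA (gen i j) (LA (gen i j) f)) x := by
  rw [← LA_pot hσ hinv (LA_contDiff hf _) hk hkr i j hx, LA, LA]
  rw [dir_congr isOpen_ball (fun z hz => LA_pot hσ hinv hf hk hkr i j hz) hx]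

lemma pot_pde
    (hσ : ∀ᵐ y ∂σ, y ∈ sphere (0 : EuclideanSpace ℝ (Fin n)) R)
    (hinv : ∀ ρ : EuclideanSpace ℝ (Fin n) ≃ₗᵢ[ℝ] EuclideanSpace ℝ (Fin n), MeasurePreserving ρ σ σ)
    {f : EuclideanSpace ℝ (Fin n) → ℝ} (hf : ContDiff ℝ ∞ f)
    {k : EuclideanSpace ℝ (Fin n) → ℝ} (hk : ContDiffOn ℝ ∞ k {0}ᶜ)
    (hkr : ∀ (ρ : EuclideanSpace ℝ (Fin n) ≃ₗᵢ[ℝ] EuclideanSpace ℝ (Fin n)) z, k (ρ z) = k z)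
    (hlap : ∀ z ≠ 0, lap k z = 0) (d : ℝ)
    (hE : ∀ y, fderiv ℝ f y y = d * f y)
    {x : EuclideanSpace ℝ (Fin n)} (hx : x ∈ ball (0 : EuclideanSpace ℝ (Fin n)) R) :
    Op 0 (Op (n - 2) (pot σ k f)) x - d * (d + n - 2) * pot σ k f x = - R ^ 2 * pot σ k (lap f) x := by
  have hlapf : Continuous (lap f) := by
    have : Continuous (fderiv ℝ (fderiv ℝ f)) :=
      (hf.fderiv_right (m := ∞) (by simp)).continuous_fderiv (by simp)
    unfold lap
    fun_prop
  have h1 := sph_lap isOpen_ball (pot_contDiffOn hσ hf.continuous hk) hx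
  have h2 : lap (pot σ k f) x = 0 := by
    have h3 : ∀ i : Fin n, fderiv ℝ (fderiv ℝ (pot σ k f)) x (ee i) (ee i) =
        pot σ (fun z => fderiv ℝ (fderiv ℝ k) z (ee i) (ee i)) f x := by
      intro i
      rw [← fderiv_dir isOpen_ball (pot_contDiffOn hσ hf.continuous hk) hx,
        dir_congr isOpen_ball (fun z hz => pot_fderiv_apply hσ hf.continuous hk hz (ee i)) hx,
        pot_fderiv_apply hσ hf.continuous (dir_contDiffOn isOpen_compl_singleton hk _) hx]
      refine integral_congr_ae ?_
      filter_upwards [hσ] with y hy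
      rw [fderiv_dir isOpen_compl_singleton hk (sub_ne_of_ball hx hy)]
    have hc : ∀ i : Fin n, ContinuousOn (fun z => fderiv ℝ (fderiv ℝ k) z (ee i) (ee i)) {0}ᶜ := by
      intro i
      have h4 : ContDiffOn ℝ ∞ (fderiv ℝ k) {0}ᶜ :=
        hk.fderiv_of_isOpen isOpen_compl_singleton (by simp)
      exact ((h4.continuousOn_fderiv_of_isOpen isOpen_compl_singleton (by simp)).clm_apply
        continuousOn_const).clm_apply continuousOn_const
    simp_rw [lap, h3, pot]
    rw [← integral_finsetSum _ fun i _ => pot_integrable hσ (hc i) hf.continuous hx]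
    refine integral_eq_zero_of_ae ?_
    filter_upwards [hσ] with y hy
    have h5 := hlap _ (sub_ne_of_ball hx hy)
    rw [lap] at h5
    simp [← Finset.mul_sum, h5]
  have hLL : ∀ i j : Fin n, Continuous (LA (gen i j) (LA (gen i j) f)) := fun i j =>
    (LA_contDiff (LA_contDiff hf _) _).continuous
  have h6 : ∑ i, ∑ j, LA (gen i j) (LA (gen i j) (pot σ k f)) x =
      2 * (R ^ 2 * pot σ k (lap f) x - d * (d + n - 2) * pot σ k f x) := by
    simp_rw [fun i j => LALA_pot hσ hinv hf hk hkr i j hx, pot]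
    simp_rw [← integral_const_mul]
    rw [← integral_sub ((pot_integrable hσ hk.continuousOn hlapf hx).const_mul _)
      ((pot_integrable hσ hk.continuousOn hf.continuous hx).const_mul _), ← integral_const_mul]
    have h7 : ∀ i j, Integrable (fun y => LA (gen i j) (LA (gen i j) f) y • k (x - y)) σ :=
      fun i j => pot_integrable hσ hk.continuousOn (hLL i j) hx
    simp_rw [← integral_finsetSum _ fun j _ => h7 _ j]
    rw [← integral_finsetSum _ fun i _ => integrable_finsetSum _ fun j _ => h7 i j]
    refine integral_congr_ae ?_
    filter_upwards [hσ] with y hy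
    have h8 := sph_lap isOpen_univ hf.contDiffOn (mem_univ y)
    have h9 : Op (n - 2) f = fun y => (d + n - 2) * f y := by
      funext y
      rw [Op, hE]; ring
    have h10 : Op 0 (Op (n - 2) f) y = d * (d + n - 2) * f y := by
      rw [h9, Op, fderiv_const_mul (hf.differentiable (by simp) y)]
      simp [hE]
      ring
    have h11 : ‖y‖ = R := by simpa using hy
    rw [h10, h11] at h8
    simp_rw [smul_eq_mul, ← Finset.sum_mul]
    rw [h8]
    ring
  rw [h6, h2] at h1
  linarith

end rotpot

section poly
variable {n : ℕ}

/-- polynomial function -/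
def pf (p : MvPolynomial (Fin n) ℝ) (y : EuclideanSpace ℝ (Fin n)) : ℝ :=
  MvPolynomial.eval (fun i => y i) p

lemma pf_hasFDerivAt (p : MvPolynomial (Fin n) ℝ) (y : EuclideanSpace ℝ (Fin n)) :
    HasFDerivAt (pf p)
      (∑ i, pf (MvPolynomial.pderiv i p) y • (EuclideanSpace.proj (𝕜 := ℝ) i :
        EuclideanSpace ℝ (Fin n) →L[ℝ] ℝ)) y := by
  induction p using MvPolynomial.induction_on with
  | C a =>
    have h : pf (MvPolynomial.C a) = fun _ : EuclideanSpace ℝ (Fin n) => a := by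
      funext y; simp [pf]
    rw [h]
    simpa [pf] using hasFDerivAt_const a y
  | add p q hp hq =>
    have h : pf (p + q) = pf p + pf q := by funext y; simp [pf]
    rw [h]
    refine (hp.add hq).congr_fderiv ?_
    simp [pf, add_smul, Finset.sum_add_distrib]
  | mul_X p i hp =>
    have h : pf (p * MvPolynomial.X i) = fun y => pf p y * y i := by funext y; simp [pf]
    rw [h]
    have h1 : HasFDerivAt (fun y : EuclideanSpace ℝ (Fin n) => y i)
      (EuclideanSpace.proj (𝕜 := ℝ) i : EuclideanSpace ℝ (Fin n) →L[ℝ] ℝ) y :=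
      (EuclideanSpace.proj (𝕜 := ℝ) i : EuclideanSpace ℝ (Fin n) →L[ℝ] ℝ).hasFDerivAt
    refine (hp.mul h1).congr_fderiv ?_
    ext w
    simp [pf, MvPolynomial.pderiv_X, Pi.single_apply, Finset.mul_sum, apply_ite, mul_comm]
    simp [mul_add, Finset.sum_add_distrib, mul_left_comm]

lemma pf_contDiff (p : MvPolynomial (Fin n) ℝ) : ContDiff ℝ ∞ (pf p) := by
  induction p using MvPolynomial.induction_on with
  | C a =>
    have h : pf (MvPolynomial.C a) = fun _ : EuclideanSpace ℝ (Fin n) => a := by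
      funext y; simp [pf]
    rw [h]
    exact contDiff_const
  | add p q hp hq =>
    have h : pf (p + q) = fun y => pf p y + pf q y := by funext y; simp [pf]
    rw [h]
    exact hp.add hq
  | mul_X p i hp =>
    have h : pf (p * MvPolynomial.X i) = fun y => pf p y * y i := by funext y; simp [pf]
    rw [h]
    exact hp.mul (EuclideanSpace.proj (𝕜 := ℝ) i : EuclideanSpace ℝ (Fin n) →L[ℝ] ℝ).contDiff

lemma pf_euler {p : MvPolynomial (Fin n) ℝ} {d : ℕ} (hp : p.IsHomogeneous d)
    (y : EuclideanSpace ℝ (Fin n)) : fderiv ℝ (pf p) y y = d * pf p y := by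
  rw [(pf_hasFDerivAt p y).fderiv]
  have h := congrArg (fun q => pf q y) hp.sum_X_mul_pderiv
  simpa [pf, mul_comm] using h

lemma pf_dir (p : MvPolynomial (Fin n) ℝ) (i : Fin n) :
    (fun y => fderiv ℝ (pf p) y (ee i)) = pf (MvPolynomial.pderiv i p) := by
  funext y
  rw [(pf_hasFDerivAt p y).fderiv]
  simp [ee_apply]

lemma pf_lap (p : MvPolynomial (Fin n) ℝ) :
    lap (pf p) = pf (∑ i, MvPolynomial.pderiv i (MvPolynomial.pderiv i p)) := by
  funext y
  rw [lap]
  simp_rw [← fderiv_dir isOpen_univ (pf_contDiff p).contDiffOn (mem_univ y), pf_dir]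
  simp_rw [fun i => congrFun (pf_dir (MvPolynomial.pderiv i p) i) y]
  simp [pf]

end poly

section kernel
variable {n : ℕ}

lemma npow_hasFDerivAt (q : ℝ) {z : EuclideanSpace ℝ (Fin n)} (hz : z ≠ 0) :
    HasFDerivAt (fun z : EuclideanSpace ℝ (Fin n) => (‖z‖ ^ 2) ^ q)
      ((q * (‖z‖ ^ 2) ^ (q - 1)) • (2 • innerSL ℝ z)) z := by
  have h1 : HasFDerivAt (fun z : EuclideanSpace ℝ (Fin n) => ‖z‖ ^ 2) (2 • innerSL ℝ z) z :=
    (hasStrictFDerivAt_norm_sq z).hasFDerivAt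
  have h2 : ‖z‖ ^ 2 ≠ 0 := by simpa using hz
  exact (Real.hasDerivAt_rpow_const (Or.inl h2)).comp_hasFDerivAt z h1

lemma fundSol_eq (n : ℕ) : fundSol n = fun z => (1 / (n * (2 - (n : ℝ)) * sphArea n)) *
    (‖z‖ ^ 2) ^ ((2 - (n : ℝ)) / 2) := by
  funext z
  rw [fundSol, ← Real.rpow_natCast_mul (norm_nonneg _)]
  congr 2
  push_cast
  ring

lemma fundSol_contDiffOn (n : ℕ) : ContDiffOn ℝ ∞ (fundSol n) {0}ᶜ := by
  rw [fundSol_eq]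
  refine contDiffOn_const.mul ?_
  intro z hz
  have h2 : ‖z‖ ^ 2 ≠ 0 := by simpa using hz
  exact ((contDiff_norm_sq ℝ).contDiffAt.rpow_const_of_ne h2).contDiffWithinAt

lemma fundSol_rot (ρ : EuclideanSpace ℝ (Fin n) ≃ₗᵢ[ℝ] EuclideanSpace ℝ (Fin n))
    (z : EuclideanSpace ℝ (Fin n)) : fundSol n (ρ z) = fundSol n z := by
  simp [fundSol]

lemma fundSol_lap {z : EuclideanSpace ℝ (Fin n)} (hz : z ≠ 0) : lap (fundSol n) z = 0 := by
  have hz' : z ∈ ({0}ᶜ : Set (EuclideanSpace ℝ (Fin n))) := hz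
  set c := (1 / (n * (2 - (n : ℝ)) * sphArea n)) with hc
  set q := ((2 - (n : ℝ)) / 2) with hq
  have h1 : ∀ w : EuclideanSpace ℝ (Fin n), EqOn (fun z => fderiv ℝ (fundSol n) z w)
      (fun z => (c * q * 2) * ((‖z‖ ^ 2) ^ (q - 1) * inner ℝ w z)) {0}ᶜ := by
    intro w z hz
    simp only
    have hfs : fundSol n = fun z => c * (‖z‖ ^ 2) ^ q := fundSol_eq n
    rw [hfs, ((npow_hasFDerivAt q hz).const_mul c).fderiv]
    simp [real_inner_comm]
    ring
  have h2 : ∀ w : EuclideanSpace ℝ (Fin n), fderiv ℝ (fderiv ℝ (fundSol n)) z w w =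
      (c * q * 2) * ((‖z‖ ^ 2) ^ (q - 1) * inner ℝ w w +
        2 * (q - 1) * (‖z‖ ^ 2) ^ (q - 1 - 1) * (inner ℝ w z) ^ 2) := by
    intro w
    rw [← fderiv_dir isOpen_compl_singleton (fundSol_contDiffOn n) hz',
      dir_congr isOpen_compl_singleton (h1 w) hz']
    have h3 : HasFDerivAt (fun z => inner ℝ w z) (innerSL ℝ w) z := (innerSL ℝ w).hasFDerivAt
    have h4 : HasFDerivAt (fun z => c * q * 2 * ((‖z‖ ^ 2) ^ (q - 1) * inner ℝ w z)) _ z :=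
      ((npow_hasFDerivAt (q - 1) hz).mul h3).const_mul (c * q * 2)
    rw [h4.fderiv]
    simp [real_inner_comm]
    ring
  simp_rw [lap, h2]
  rw [← Finset.mul_sum, Finset.sum_add_distrib, ← Finset.mul_sum, ← Finset.mul_sum]
  have h4 : ∑ i : Fin n, inner ℝ (ee i) (ee i : EuclideanSpace ℝ (Fin n)) = n := by
    simp [ee]
  have h5 : ∑ i : Fin n, (inner ℝ (ee i) z) ^ 2 = ‖z‖ ^ 2 := by
    rw [EuclideanSpace.norm_sq_eq]
    simp [ee, EuclideanSpace.inner_single_left]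
  have h6 : (‖z‖ ^ 2) ^ (q - 1 - 1) * ‖z‖ ^ 2 = (‖z‖ ^ 2) ^ (q - 1) := by
    have h2 : 0 < ‖z‖ ^ 2 := by positivity
    conv_lhs => rw [← Real.rpow_add_one h2.ne']
    congr 1; ring
  rw [h4, h5, mul_assoc (2 * (q - 1)), h6]
  have h7 : (n : ℝ) + 2 * (q - 1) = 0 := by rw [hq]; ring
  linear_combination (c * q * 2) * (‖z‖ ^ 2) ^ (q - 1) * h7

end kernel

lemma Op_Op {E : Type} [NormedAddCommGroup E] [NormedSpace ℝ E]
    {u : E → ℝ} {B : Set E} (hB : IsOpen B) (hu : ContDiffOn ℝ ∞ u B)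
    (a b : ℝ) {x : E} (hx : x ∈ B) : Op a (Op b u) x =
      fderiv ℝ (fderiv ℝ u) x x x + (1 + a + b) * fderiv ℝ u x x + a * b * u x := by
  rw [Op, Op_dir hB hu _ hx, Op, fderiv_dir hB hu hx, Op]
  ring

lemma DW_const_mul {E : Type} [NormedAddCommGroup E] [NormedSpace ℝ E]
    (u : E → ℝ) (c : ℝ) (l : List E) (x : E) :
    DW l (fun z => c * u z) x = c * DW l u x := by
  induction l generalizing x with
  | nil => rfl
  | cons w l ih =>
    simp only [DW]
    rw [funext ih]
    have h := fderiv_const_smul_field (𝕜 := ℝ) c (f := DW l u)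
    have h' := congrFun h x
    change fderiv ℝ (c • DW l u) x w = _
    rw [h']
    simp

lemma DW_zero {E : Type} [NormedAddCommGroup E] [NormedSpace ℝ E] (l : List E) (x : E) :
    DW l (fun _ => (0 : ℝ)) x = 0 := by
  simpa using DW_const_mul (fun _ : E => (0 : ℝ)) 0 l x

section main
variable {n : ℕ} {σ : Measure (EuclideanSpace ℝ (Fin n))} {R : ℝ} [IsFiniteMeasure σ]

lemma main_hom (hn : 3 ≤ n) (hσ : ∀ᵐ y ∂σ, y ∈ sphere (0 : EuclideanSpace ℝ (Fin n)) R)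
    (hinv : ∀ ρ : EuclideanSpace ℝ (Fin n) ≃ₗᵢ[ℝ] EuclideanSpace ℝ (Fin n), MeasurePreserving ρ σ σ)
    (d : ℕ) : ∀ (p : MvPolynomial (Fin n) ℝ), p.IsHomogeneous d →
      ∀ l : List (EuclideanSpace ℝ (Fin n)), d + 1 ≤ l.length →
      ∀ x ∈ ball (0 : EuclideanSpace ℝ (Fin n)) R, DW l (pot σ (fundSol n) (pf p)) x = 0 := by
  induction d using Nat.strong_induction_on with
  | _ d ih =>
  intro p hp l hl
  set u := pot σ (fundSol n) (pf p) with hu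
  have hus : ContDiffOn ℝ ∞ u (ball 0 R) :=
    pot_contDiffOn hσ (pf_contDiff p).continuous (fundSol_contDiffOn n)
  set q := ∑ i, MvPolynomial.pderiv i (MvPolynomial.pderiv i p) with hq
  have hq0 : ∀ x ∈ ball (0 : EuclideanSpace ℝ (Fin n)) R,
      DW l (pot σ (fundSol n) (pf q)) x = 0 := by
    rcases Nat.eq_zero_or_pos d with h0 | h0
    · have h1 : q = 0 := by
        subst h0
        rw [← MvPolynomial.totalDegree_zero_iff_isHomogeneous,
          MvPolynomial.totalDegree_eq_zero_iff_eq_C] at hp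
        rw [hq, hp]
        simp
      intro x _
      have h2 : pot σ (fundSol n) (pf q) = fun _ => (0 : ℝ) := by
        funext z
        simp [h1, pot, pf]
      rw [h2, DW_zero]
    · refine ih (d - 1 - 1) (by omega) q ?_ l (by omega)
      exact MvPolynomial.IsHomogeneous.sum _ _ _ fun i _ => hp.pderiv.pderiv
  have hpde : EqOn (Op (-d) (Op (d + n - 2) u)) (fun x => - R ^ 2 * pot σ (fundSol n) (pf q) x)
      (ball 0 R) := by
    intro x hx
    have h := pot_pde hσ hinv (pf_contDiff p) (fundSol_contDiffOn n) fundSol_rot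
      (fun z hz => fundSol_lap hz) d (pf_euler hp) hx
    rw [pf_lap, ← hq, ← hu, Op_Op isOpen_ball hus _ _ hx] at h
    simp only
    rw [Op_Op isOpen_ball hus _ _ hx, ← h]
    ring
  have h1 : ∀ x ∈ ball (0 : EuclideanSpace ℝ (Fin n)) R,
      Op (-d + l.length) (Op (d + n - 2 + l.length) (DW l u)) x = 0 := by
    intro x hx
    rw [← Op_congr isOpen_ball (DW_Op isOpen_ball hus _ l) _ hx,
      ← DW_Op isOpen_ball (Op_contDiffOn isOpen_ball hus _) _ l hx,
      DW_congr isOpen_ball hpde l hx, DW_const_mul, hq0 x hx, mul_zero]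
  obtain ⟨e, he⟩ := Nat.exists_eq_add_of_le hl
  obtain ⟨n', hn'⟩ := Nat.exists_eq_add_of_le hn
  have hdl := DW_contDiffOn isOpen_ball hus l
  have e1 : (-d + l.length : ℝ) = (e : ℕ) + 1 := by rw [he]; push_cast; ring
  have e2 : (d + n - 2 + l.length : ℝ) = ((d + n' + l.length : ℕ) : ℝ) + 1 := by
    have h3 : (n : ℝ) = 3 + n' := by exact_mod_cast hn'
    push_cast
    rw [h3]
    ring
  rw [e1, e2] at h1
  exact Op_zero hdl _ (Op_zero (Op_contDiffOn isOpen_ball hdl _) _ h1)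

lemma main_poly (hn : 3 ≤ n) (hσ : ∀ᵐ y ∂σ, y ∈ sphere (0 : EuclideanSpace ℝ (Fin n)) R)
    (hinv : ∀ ρ : EuclideanSpace ℝ (Fin n) ≃ₗᵢ[ℝ] EuclideanSpace ℝ (Fin n), MeasurePreserving ρ σ σ)
    (k m : ℕ) (hm : k + 1 ≤ m)
    (v : Fin m → EuclideanSpace ℝ (Fin n)) (p : MvPolynomial (Fin n) ℝ) (hp : p.totalDegree ≤ k)
    (x : EuclideanSpace ℝ (Fin n)) (hx : x ∈ ball (0 : EuclideanSpace ℝ (Fin n)) R) :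
    ∫ y, (iteratedFDeriv ℝ m (fun z => fundSol n (z - y)) x v) * pf p y ∂σ = 0 := by
  have h1 : ∫ y, (iteratedFDeriv ℝ m (fun z => fundSol n (z - y)) x v) * pf p y ∂σ =
      pot σ (DW (List.ofFn v) (fundSol n)) (pf p) x := by
    refine integral_congr_ae ?_
    filter_upwards [hσ] with y hy
    have hs : ContDiffOn ℝ ∞ (fun z => fundSol n (z - y)) {y}ᶜ :=
      (fundSol_contDiffOn n).comp (by fun_prop) fun z hz => by
        simpa [sub_eq_zero] using hz
    rw [iter_eq_DW isOpen_compl_singleton hs m v x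
      (fun h => sub_ne_of_ball hx hy (sub_eq_zero.2 h)), DW_comp_sub, smul_eq_mul, mul_comm]
  have hks := DW_contDiffOn isOpen_compl_singleton (fundSol_contDiffOn n) (List.ofFn v)
  rw [h1, pot]
  have h2 : ∀ y, pf p y = ∑ i ∈ Finset.range (p.totalDegree + 1),
      pf (MvPolynomial.homogeneousComponent i p) y := by
    intro y
    conv_lhs => rw [← MvPolynomial.sum_homogeneousComponent p]
    simp [pf]
  simp_rw [h2, Finset.sum_smul]
  rw [integral_finsetSum _ fun i _ => pot_integrable hσ hks.continuousOn (pf_contDiff _).continuous hx]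
  refine Finset.sum_eq_zero fun i hi => ?_
  have h3 := main_hom hn hσ hinv i _ (MvPolynomial.homogeneousComponent_isHomogeneous i p)
    (List.ofFn v) (by simp at hi ⊢; omega) x hx
  rwa [pot_DW hσ (pf_contDiff _).continuous (fundSol_contDiffOn n) _ hx] at h3

end main

open scoped Pointwise in
lemma sphere_smul_eq {n : ℕ} {R : ℝ} (hR : 0 < R) : sphere (0 : EuclideanSpace ℝ (Fin n)) R =
    R • sphere (0 : EuclideanSpace ℝ (Fin n)) 1 := by
  rw [smul_sphere' hR.ne']
  simp [abs_of_pos hR]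

theorem stmt_1 (n k m : ℕ) (hn : 3 ≤ n) (hm : k + 1 ≤ m) (R : ℝ) (hR : 0 < R)
    (v : Fin m → Fin n) (p : MvPolynomial (Fin n) ℝ) (hp : p.totalDegree ≤ k)
    (x : EuclideanSpace ℝ (Fin n)) (hx : ‖x‖ < R) :
    (∫ y in sphere (0 : EuclideanSpace ℝ (Fin n)) R,
        (iteratedFDeriv ℝ m (fun z => fundSol n (z - y)) x fun i => ee (v i)) *
          MvPolynomial.eval (fun i => y i) p
        ∂μH[(n : ℝ) - 1]) = 0 := by
  by_cases h0 : sphArea n = 0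
  · have h1 : ∀ y : EuclideanSpace ℝ (Fin n), (fun z => fundSol n (z - y)) = fun _ => (0 : ℝ) := by
      intro y; funext z; simp [fundSol, h0]
    simp only [h1]
    have h2 : iteratedFDeriv ℝ m (fun _ : EuclideanSpace ℝ (Fin n) => (0 : ℝ)) = 0 :=
      iteratedFDeriv_fun_zero
    simp [h2]
  have hfin1 : μH[(n : ℝ) - 1] (sphere (0 : EuclideanSpace ℝ (Fin n)) 1) ≠ ⊤ := by
    intro h
    exact h0 (by simp [sphArea, h])
  have hn1 : (0 : ℝ) ≤ (n : ℝ) - 1 := by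
    have : (3 : ℝ) ≤ n := by exact_mod_cast hn
    linarith
  have hfin : μH[(n : ℝ) - 1] (sphere (0 : EuclideanSpace ℝ (Fin n)) R) ≠ ⊤ := by
    rw [sphere_smul_eq hR, Measure.hausdorffMeasure_smul₀ hn1 hR.ne']
    exact ENNReal.mul_ne_top (by simp) hfin1
  have : IsFiniteMeasure ((μH[(n : ℝ) - 1]).restrict (sphere (0 : EuclideanSpace ℝ (Fin n)) R)) :=
    ⟨by rw [Measure.restrict_apply_univ]; exact hfin.lt_top⟩
  refine main_poly hn (ae_restrict_mem isClosed_sphere.measurableSet) ?_ k m hm _ p hp x (by simpa using hx)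
  intro ρ
  have h1 := (ρ.toIsometryEquiv.measurePreserving_hausdorffMeasure ((n : ℝ) - 1)).restrict_preimage
    (isClosed_sphere (x := (0 : EuclideanSpace ℝ (Fin n))) (ε := R)).measurableSet
  have h2 : ρ.toIsometryEquiv ⁻¹' sphere (0 : EuclideanSpace ℝ (Fin n)) R = sphere 0 R := by
    ext y; simp
  rw [h2] at h1
  exact h1
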